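/- arXiv:2002.01610 — 2 statements merged into one kernel-verified Lean document; each statement's English description precedes it below -/
import Mathlib

section
/- Let G and H be two activity-on-edge graphs with the same set of tasks (i.e., there is a label-preserving bijection between the task edges of G and those of H). Then G and H have the same reachability relation on their tasks (for all tasks T ≠ T', T reaches T' in G if and only if T reaches T' in H) if and only if G and H have the same set of potential critical paths. -/
namespace AOEPaper

/-- An activity-on-edge graph: a directed multigraph on the vertex set `verts`,
whose task edges are indexed by the type `T` (the distinct task labels), each task `t`
being an edge from `St t` to `En t`, together with a multiset `unl` of unlabeled edges. -/
structure AOE (V T : Type) where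
  verts : Finset V
  St : T → V
  En : T → V
  stMem : ∀ t, St t ∈ verts
  enMem : ∀ t, En t ∈ verts
  unl : Multiset (V × V)
  unlMem : ∀ e ∈ unl, e.1 ∈ verts ∧ e.2 ∈ verts

/-- One-step adjacency: an unlabeled edge or a task edge from `a` to `b`. -/
def AOE.adj {V T : Type} (G : AOE V T) (a b : V) : Prop :=
  (a, b) ∈ G.unl ∨ ∃ t, G.St t = a ∧ G.En t = b

/-- The graph has no directed cycle. -/
def AOE.Acyclic {V T : Type} (G : AOE V T) : Prop :=
  ∀ v : V, ¬ Relation.TransGen G.adj v v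

/-- Task `t` reaches task `t'`: `En t = St t'` or there is a directed path from
`En t` to `St t'` (intended only for `t ≠ t'`). -/
def AOE.reach {V T : Type} (G : AOE V T) (t t' : T) : Prop :=
  Relation.ReflTransGen G.adj (G.En t) (G.St t')

/-- A sequence of tasks in which each task reaches the next. -/
def AOE.chain {V T : Type} (G : AOE V T) (l : List T) : Prop :=
  l.Chain' fun t t' => t ≠ t' ∧ G.reach t t'

/-- A potential critical path: a maximal sequence of tasks in which each task
reaches the next (not a subsequence of any other such sequence). -/
def AOE.critPath {V T : Type} (G : AOE V T) (l : List T) : Prop :=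
  G.chain l ∧ ∀ l' : List T, G.chain l' → l.Sublist l' → l' = l

/-- Two AOEs with the same task labels are equivalent if they have the same set of
potential critical paths. -/
def AOE.Equiv {V W T : Type} (G : AOE V T) (H : AOE W T) : Prop :=
  ∀ l : List T, G.critPath l ↔ H.critPath l

/-- An AOE is optimal if it minimizes the number of vertices in its equivalence class. -/
def Optimal {W T : Type} (G : AOE W T) : Prop :=
  ∀ (U : Type) (H : AOE U T), H.Acyclic → AOE.Equiv G H → G.verts.card ≤ H.verts.card

/-- The vertex map replacing `v` by `u`. -/
def mergeV {V : Type} [DecidableEq V] (u v x : V) : V := if x = v then u else x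

theorem mergeV_mem {V : Type} [DecidableEq V] {S : Finset V} (u v x : V) (hx : x ∈ S) :
    mergeV u v x ∈ insert u (S.erase v) := by
  unfold mergeV
  split_ifs with h
  · exact Finset.mem_insert_self _ _
  · exact Finset.mem_insert_of_mem (Finset.mem_erase.mpr ⟨h, hx⟩)

/-- Merge vertices `u` and `v` into the single vertex `u`. -/
def AOE.merge {V T : Type} [DecidableEq V] (G : AOE V T) (u v : V) : AOE V T where
  verts := insert u (G.verts.erase v)
  St t := mergeV u v (G.St t)
  En t := mergeV u v (G.En t)
  stMem t := mergeV_mem u v (G.St t) (G.stMem t)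
  enMem t := mergeV_mem u v (G.En t) (G.enMem t)
  unl := G.unl.map fun e => (mergeV u v e.1, mergeV u v e.2)
  unlMem := by
    intro e he
    rw [Multiset.mem_map] at he
    obtain ⟨a, ha, rfl⟩ := he
    obtain ⟨h1, h2⟩ := G.unlMem a ha
    exact ⟨mergeV_mem u v a.1 h1, mergeV_mem u v a.2 h2⟩

/-- Delete one copy of the unlabeled edge `(u, v)`. -/
def AOE.delUnl {V T : Type} [DecidableEq V] (G : AOE V T) (u v : V) : AOE V T where
  verts := G.verts
  St := G.St
  En := G.En
  stMem := G.stMem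
  enMem := G.enMem
  unl := G.unl.erase (u, v)
  unlMem := fun e he => G.unlMem e (Multiset.mem_of_mem_erase he)

/-- Rule 1 (outgoing version): `u` and `v` are distinct vertices with no outgoing task
edges and precisely the same outgoing neighbors. -/
def Rule1OutCond {V T : Type} (G : AOE V T) (u v : V) : Prop :=
  u ∈ G.verts ∧ v ∈ G.verts ∧ u ≠ v ∧
    (∀ t, G.St t ≠ u) ∧ (∀ t, G.St t ≠ v) ∧ ∀ w, G.adj u w ↔ G.adj v w

/-- Rule 1 (incoming version): `u` and `v` are distinct vertices with no incoming task
edges and precisely the same incoming neighbors. -/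
def Rule1InCond {V T : Type} (G : AOE V T) (u v : V) : Prop :=
  u ∈ G.verts ∧ v ∈ G.verts ∧ u ≠ v ∧
    (∀ t, G.En t ≠ u) ∧ (∀ t, G.En t ≠ v) ∧ ∀ w, G.adj w u ↔ G.adj w v

/-- Rule 2: `(u, v)` is an unlabeled edge and there is another directed path from `u`
to `v` not using this edge. -/
def Rule2Cond {V T : Type} [DecidableEq V] (G : AOE V T) (u v : V) : Prop :=
  (u, v) ∈ G.unl ∧ Relation.TransGen (G.delUnl u v).adj u v

/-- Rule 3: `(u, v)` is an unlabeled edge such that (i) there is no other path from `u`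
to `v`; (ii) if `u` has an outgoing task then `v` has no incoming edge other than `(u,v)`;
(iii) if `v` has an incoming task then `u` has no outgoing edge other than `(u,v)`;
(iv) every incoming neighbor of `v` has a path to every outgoing neighbor of `u`. -/
def Rule3Cond {V T : Type} [DecidableEq V] (G : AOE V T) (u v : V) : Prop :=
  (u, v) ∈ G.unl ∧
  (¬ Relation.TransGen (G.delUnl u v).adj u v) ∧
  ((∃ t, G.St t = u) → (∀ t, G.En t ≠ v) ∧ ∀ w, (w, v) ∈ G.unl → w = u) ∧
  ((∃ t, G.En t = v) → (∀ t, G.St t ≠ u) ∧ ∀ w, (u, w) ∈ G.unl → w = v) ∧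
  ∀ w z, G.adj w v → G.adj u z → Relation.ReflTransGen G.adj w z

/-- One application of a simplification rule. -/
inductive Step {V T : Type} [DecidableEq V] : AOE V T → AOE V T → Prop
  | rule1out {G : AOE V T} (u v : V) : Rule1OutCond G u v → Step G (G.merge u v)
  | rule1in {G : AOE V T} (u v : V) : Rule1InCond G u v → Step G (G.merge u v)
  | rule2 {G : AOE V T} (u v : V) : Rule2Cond G u v → Step G (G.delUnl u v)
  | rule3 {G : AOE V T} (u v : V) : Rule3Cond G u v → Step G ((G.delUnl u v).merge u v)

/-- A canonical AOE: the naive expansion of an activity-on-node graph. Each task has its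
own pair of endpoint vertices, all pairwise distinct; there are a global start vertex `s`
and a global end vertex `e`; unlabeled edges other than those leaving `s` or entering `e`
go from end vertices of tasks to start vertices of tasks; `s` has unlabeled edges to
exactly the vertices whose only incoming edges come from `s`, and `e` has unlabeled edges
from exactly the vertices whose only outgoing edges go to `e`. -/
def Canonical {V T : Type} [DecidableEq V] [Fintype T] (G : AOE V T) : Prop :=
  G.Acyclic ∧ G.unl.Nodup ∧
  Function.Injective G.St ∧ Function.Injective G.En ∧
  (∀ t t' : T, G.St t ≠ G.En t') ∧
  ∃ s e : V, s ≠ e ∧ s ∈ G.verts ∧ e ∈ G.verts ∧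
    (∀ t, G.St t ≠ s ∧ G.St t ≠ e ∧ G.En t ≠ s ∧ G.En t ≠ e) ∧
    (G.verts =
      insert s (insert e (Finset.image G.St Finset.univ ∪ Finset.image G.En Finset.univ))) ∧
    (∀ a b : V, (a, b) ∈ G.unl → a ≠ s → b ≠ e → (∃ t, G.En t = a) ∧ ∃ t', G.St t' = b) ∧
    (∀ b : V, (s, b) ∈ G.unl ↔
      b ∈ G.verts ∧ b ≠ s ∧ (∀ t, G.En t ≠ b) ∧ ∀ a, (a, b) ∈ G.unl → a = s) ∧
    (∀ a : V, (a, e) ∈ G.unl ↔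
      a ∈ G.verts ∧ a ≠ e ∧ (∀ t, G.St t ≠ a) ∧ ∀ b, (a, b) ∈ G.unl → b = e)

/-- An output AOE: obtained from a canonical AOE by a finite sequence of rule
applications, such that no rule can still be applied. -/
def IsOutput {V T : Type} [DecidableEq V] [Fintype T] (G A : AOE V T) : Prop :=
  Canonical G ∧ Relation.ReflTransGen Step G A ∧ ∀ B : AOE V T, ¬ Step A B

theorem mergeSetV_mem {V : Type} [DecidableEq V] {S : Finset V} (C : Finset V) (c x : V)
    (hx : x ∈ S) : (if x ∈ C then c else x) ∈ insert c (S \ C) := by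
  split_ifs with h
  · exact Finset.mem_insert_self _ _
  · exact Finset.mem_insert_of_mem (Finset.mem_sdiff.mpr ⟨hx, h⟩)

/-- Merge all vertices of `C` into the single vertex `c`. -/
def AOE.mergeSet {V T : Type} [DecidableEq V] (G : AOE V T) (C : Finset V) (c : V) :
    AOE V T where
  verts := insert c (G.verts \ C)
  St t := if G.St t ∈ C then c else G.St t
  En t := if G.En t ∈ C then c else G.En t
  stMem t := mergeSetV_mem C c (G.St t) (G.stMem t)
  enMem t := mergeSetV_mem C c (G.En t) (G.enMem t)
  unl := G.unl.map fun e => (if e.1 ∈ C then c else e.1, if e.2 ∈ C then c else e.2)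
  unlMem := by
    intro e he
    rw [Multiset.mem_map] at he
    obtain ⟨a, ha, rfl⟩ := he
    obtain ⟨h1, h2⟩ := G.unlMem a ha
    exact ⟨mergeSetV_mem C c a.1 h1, mergeSetV_mem C c a.2 h2⟩

theorem AOE.reach_irrefl {V T : Type} {G : AOE V T} (hG : G.Acyclic) (t : T) :
    ¬ G.reach t t := fun h =>
  hG (G.St t) (Relation.TransGen.head' (Or.inr ⟨t, rfl, rfl⟩) h)

theorem AOE.reach_trans {V T : Type} {G : AOE V T} {a b c : T}
    (h1 : G.reach a b) (h2 : G.reach b c) : G.reach a c :=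
  Relation.ReflTransGen.trans (Relation.ReflTransGen.tail h1 (Or.inr ⟨b, rfl, rfl⟩)) h2

theorem AOE.chain_pairwise {V T : Type} {G : AOE V T} (hG : G.Acyclic) {l : List T}
    (h : G.chain l) : l.Pairwise fun t t' => t ≠ t' ∧ G.reach t t' := by
  haveI : IsTrans T (fun t t' => t ≠ t' ∧ G.reach t t') := ⟨fun a b c hab hbc => by
    have hr := AOE.reach_trans hab.2 hbc.2
    refine ⟨?_, hr⟩
    rintro rfl
    exact AOE.reach_irrefl hG _ hr⟩
  exact List.isChain_iff_pairwise.1 h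

theorem AOE.exists_critPath {V T : Type} [Fintype T] {G : AOE V T} (hG : G.Acyclic) (n : ℕ) :
    ∀ l : List T, G.chain l → Fintype.card T ≤ l.length + n →
      ∃ l', G.critPath l' ∧ l.Sublist l' := by
  induction n with
  | zero =>
    intro l hl hn
    refine ⟨l, ⟨hl, fun l' hl' hs => ?_⟩, List.Sublist.refl l⟩
    have hnd : l'.Nodup := (AOE.chain_pairwise hG hl').imp fun h => h.1
    have := hnd.length_le_card
    exact (hs.eq_of_length_le (by omega)).symm
  | succ n ih =>
    intro l hl hn
    by_cases hc : G.critPath l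
    · exact ⟨l, hc, List.Sublist.refl l⟩
    · have : ∃ l', G.chain l' ∧ l.Sublist l' ∧ l' ≠ l := by
        by_contra hne
        push Not at hne
        exact hc ⟨hl, hne⟩
      obtain ⟨l', hl', hs, hne⟩ := this
      have hlt : l.length < l'.length := by
        by_contra hle
        exact hne (hs.eq_of_length_le (by omega)).symm
      obtain ⟨m, hm, hsm⟩ := ih l' hl' (by omega)
      exact ⟨m, hm, hs.trans hsm⟩

theorem AOE.reach_of_critPath {V W T : Type} [Fintype T] {G : AOE V T} {H : AOE W T}
    (hG : G.Acyclic) (hH : H.Acyclic) (h : ∀ l : List T, G.critPath l → H.critPath l)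
    {t t' : T} (hne : t ≠ t') (hr : G.reach t t') : H.reach t t' := by
  have hc : G.chain [t, t'] := List.isChain_pair.2 ⟨hne, hr⟩
  obtain ⟨l, hl, hs⟩ := AOE.exists_critPath hG (Fintype.card T) _ hc (by omega)
  have hp := (AOE.chain_pairwise hH (h l hl).1).sublist hs
  exact (List.pairwise_pair.1 hp).2

/-- Two AOEs with the same set of tasks have the same reachability
relation on their tasks iff they have the same set of potential critical paths. -/
theorem stmt0 {V W T : Type} [Fintype T] (G : AOE V T) (H : AOE W T)
    (hG : G.Acyclic) (hH : H.Acyclic) :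
    (∀ t t' : T, t ≠ t' → (G.reach t t' ↔ H.reach t t')) ↔
      ∀ l : List T, G.critPath l ↔ H.critPath l := by
  constructor
  · intro h l
    have hrel : (fun t t' => t ≠ t' ∧ G.reach t t') = fun t t' => t ≠ t' ∧ H.reach t t' := by
      funext t t'
      exact propext (and_congr_right (h t t'))
    have hch : G.chain = H.chain := by
      funext l
      unfold AOE.chain
      rw [hrel]
    unfold AOE.critPath
    rw [hch]
  · intro h t t' hne
    exact ⟨AOE.reach_of_critPath hG hH (fun l => (h l).1) hne,
      AOE.reach_of_critPath hH hG (fun l => (h l).2) hne⟩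

end AOEPaper
end

section
/- Let G be a directed acyclic multigraph with task-labeled and unlabeled edges, and let G' be obtained from G by one application of Rule 1, Rule 2, or Rule 3 of the simplification algorithm. Then G' is acyclic. Consequently, every intermediate graph obtained from an acyclic input by applying rules of the algorithm is acyclic. -/
namespace AOEPaper

theorem mergeV_eq {V : Type} [DecidableEq V] {u v a b : V} (h : mergeV u v a = mergeV u v b) :
    a = b ∨ ((a = u ∨ a = v) ∧ (b = u ∨ b = v)) := by
  unfold mergeV at h
  split_ifs at h with h1 h2 h2 <;> grind

theorem merge_adj {V T : Type} [DecidableEq V] {G : AOE V T} {u v x y : V}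
    (h : (G.merge u v).adj x y) :
    ∃ a b, mergeV u v a = x ∧ mergeV u v b = y ∧ G.adj a b := by
  rcases h with h | ⟨t, h1, h2⟩
  · obtain ⟨e, he, heq⟩ := Multiset.mem_map.mp h
    obtain ⟨h1, h2⟩ := Prod.mk.inj heq
    exact ⟨e.1, e.2, h1, h2, Or.inl he⟩
  · exact ⟨G.St t, G.En t, h1, h2, Or.inr ⟨t, rfl, rfl⟩⟩

/-- Merging two vertices, neither of which reaches the other, preserves acyclicity. -/
theorem merge_acyclic {V T : Type} [DecidableEq V] {G : AOE V T} (hG : G.Acyclic) (u v : V)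
    (huv : ¬ Relation.TransGen G.adj u v) (hvu : ¬ Relation.TransGen G.adj v u) :
    (G.merge u v).Acyclic := by
  have hE : ∀ c d, (c = u ∨ c = v) → (d = u ∨ d = v) → ¬ Relation.TransGen G.adj c d := by
    rintro c d (rfl | rfl) (rfl | rfl)
    · exact hG _
    · exact huv
    · exact hvu
    · exact hG _
  have key : ∀ x y, Relation.TransGen (G.merge u v).adj x y →
      ∃ a b, mergeV u v a = x ∧ mergeV u v b = y ∧ (Relation.TransGen G.adj a b ∨
        ∃ c d, (c = u ∨ c = v) ∧ (d = u ∨ d = v) ∧ Relation.TransGen G.adj a c ∧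
          Relation.TransGen G.adj d b) := by
    intro x y h
    induction h with
    | single h =>
      obtain ⟨a, b, ha, hb, hab⟩ := merge_adj h
      exact ⟨a, b, ha, hb, Or.inl (.single hab)⟩
    | tail _ h ih =>
      obtain ⟨a, b, ha, hb, hab⟩ := ih
      obtain ⟨a', b', ha', hb', hab'⟩ := merge_adj h
      refine ⟨a, b', ha, hb', ?_⟩
      rcases mergeV_eq (hb.trans ha'.symm) with rfl | ⟨h1, h2⟩
      · rcases hab with hab | ⟨c, d, hc, hd, hac, hdb⟩
        · exact Or.inl (hab.tail hab')
        · exact Or.inr ⟨c, d, hc, hd, hac, hdb.tail hab'⟩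
      · rcases hab with hab | ⟨c, d, hc, hd, hac, hdb⟩
        · exact Or.inr ⟨b, a', h1, h2, hab, .single hab'⟩
        · exact absurd hdb (hE _ _ hd h1)
  intro x hx
  obtain ⟨a, b, ha, hb, hab⟩ := key x x hx
  rcases mergeV_eq (ha.trans hb.symm) with rfl | ⟨h1, h2⟩
  · rcases hab with hab | ⟨c, d, hc, hd, hac, hdb⟩
    · exact hG _ hab
    · exact hE _ _ hd hc (hdb.trans hac)
  · rcases hab with hab | ⟨c, d, hc, hd, hac, hdb⟩
    · exact hE _ _ h1 h2 hab
    · exact hE _ _ h1 hc hac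

theorem delUnl_adj {V T : Type} [DecidableEq V] {G : AOE V T} {u v x y : V}
    (h : (G.delUnl u v).adj x y) : G.adj x y :=
  h.imp (fun h => Multiset.mem_of_mem_erase h) id

theorem delUnl_acyclic {V T : Type} [DecidableEq V] {G : AOE V T} (hG : G.Acyclic) (u v : V) :
    (G.delUnl u v).Acyclic :=
  fun x hx => hG x (Relation.TransGen.mono (fun _ _ => delUnl_adj) _ _ hx)

theorem no_path_of_out {V T : Type} {G : AOE V T} (hG : G.Acyclic) {u v : V}
    (h : ∀ w, G.adj u w → G.adj v w) : ¬ Relation.TransGen G.adj u v := by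
  intro hp
  obtain ⟨w, h1, h2⟩ := Relation.TransGen.head'_iff.mp hp
  exact hG v (Relation.TransGen.head' (h w h1) h2)

theorem no_path_of_in {V T : Type} {G : AOE V T} (hG : G.Acyclic) {u v : V}
    (h : ∀ w, G.adj w v → G.adj w u) : ¬ Relation.TransGen G.adj u v := by
  intro hp
  obtain ⟨w, h1, h2⟩ := Relation.TransGen.tail'_iff.mp hp
  exact hG u (Relation.TransGen.tail' h1 (h w h2))

theorem step_acyclic {V T : Type} [DecidableEq V] {G G' : AOE V T} (hG : G.Acyclic)
    (h : Step G G') : G'.Acyclic := by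
  cases h with
  | rule1out u v h =>
    obtain ⟨-, -, -, -, -, h⟩ := h
    exact merge_acyclic hG u v (no_path_of_out hG fun w => (h w).1)
      (no_path_of_out hG fun w => (h w).2)
  | rule1in u v h =>
    obtain ⟨-, -, -, -, -, h⟩ := h
    exact merge_acyclic hG u v (no_path_of_in hG fun w => (h w).2)
      (no_path_of_in hG fun w => (h w).1)
  | rule2 u v h => exact delUnl_acyclic hG u v
  | rule3 u v h =>
    obtain ⟨he, hn, -⟩ := h
    exact merge_acyclic (delUnl_acyclic hG u v) u v hn fun hp =>
      hG u (Relation.TransGen.head (Or.inl he) (Relation.TransGen.mono (fun _ _ => delUnl_adj) _ _ hp))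

/-- One application of Rule 1, 2 or 3 to an acyclic graph yields an acyclic
graph; consequently every intermediate graph obtained from an acyclic input by applying
rules of the algorithm is acyclic. -/
theorem stmt5 {V T : Type} [DecidableEq V] (G : AOE V T) (hG : G.Acyclic) :
    (∀ G' : AOE V T, Step G G' → G'.Acyclic) ∧
      ∀ H : AOE V T, Relation.ReflTransGen Step G H → H.Acyclic := by
  refine ⟨fun G' h => step_acyclic hG h, fun H h => ?_⟩
  induction h with
  | refl => exact hG
  | tail _ h ih => exact step_acyclic ih h

end AOEPaper
end
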